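/- Let P be a propositional normal logic program whose Fitting model M is total. Then M⁺ = M ∩ B_P is a stable model of P. -/

import Mathlib

namespace LP

/-- A literal over a set of propositional atoms: an atom or a negated atom. -/
inductive Lit (atom : Type) where
  | pos : atom → Lit atom
  | neg : atom → Lit atom

/-- The underlying atom of a literal. -/
def Lit.atomOf {atom : Type} : Lit atom → atom
  | .pos a => a
  | .neg a => a

/-- A clause `head ← pos₁,…,posₙ, ¬neg₁,…,¬negₘ`. -/
structure Clause (atom : Type) where
  head : atom
  pos : Finset atom
  neg : Finset atom

variable {atom : Type}

/-- A (propositional) normal logic program: a set of clauses. -/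
abbrev Program (atom : Type) := Set (Clause atom)

/-- Partial interpretations: sets of literals. -/
abbrev Interp (atom : Type) := Set (Lit atom)

def Consistent (I : Interp atom) : Prop := ∀ a : atom, ¬ (Lit.pos a ∈ I ∧ Lit.neg a ∈ I)

def Total (I : Interp atom) : Prop := ∀ a : atom, Lit.pos a ∈ I ∨ Lit.neg a ∈ I

/-- An atom is defined (true or false, i.e. not undefined) in `I`. -/
def Defined (I : Interp atom) (A : atom) : Prop := Lit.pos A ∈ I ∨ Lit.neg A ∈ I

/-- Every body literal of the clause is true in `I`. -/
def BodyTrue (I : Interp atom) (C : Clause atom) : Prop :=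
  (∀ a ∈ C.pos, Lit.pos a ∈ I) ∧ (∀ b ∈ C.neg, Lit.neg b ∈ I)

/-- Some body literal of the clause is false in `I`. -/
def BodyFalse (I : Interp atom) (C : Clause atom) : Prop :=
  (∃ a ∈ C.pos, Lit.neg a ∈ I) ∨ (∃ b ∈ C.neg, Lit.pos b ∈ I)

/-- Three-valued model. -/
def Model3 (P : Program atom) (I : Interp atom) : Prop :=
  Consistent I ∧ ∀ C ∈ P,
    (BodyTrue I C → Lit.pos C.head ∈ I) ∧ (¬ BodyFalse I C → Lit.neg C.head ∉ I)

/-- Two-valued model. -/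
def Model2 (P : Program atom) (M : Set atom) : Prop :=
  ∀ C ∈ P, (∀ a ∈ C.pos, a ∈ M) → (∀ b ∈ C.neg, b ∉ M) → C.head ∈ M

/-- A program is definite if no clause has negative body literals. -/
def Definite (P : Program atom) : Prop := ∀ C ∈ P, C.neg = ∅

/-- The one-step operator `T_P⁺` for definite programs. -/
def Tplus (P : Program atom) (M : Set atom) : Set atom :=
  {A | ∃ C ∈ P, C.head = A ∧ C.neg = ∅ ∧ ∀ a ∈ C.pos, a ∈ M}

def TplusIter (P : Program atom) : ℕ → Set atom
  | 0 => ∅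
  | n + 1 => Tplus P (TplusIter P n)

/-- `T_P⁺ ↑ ω`, the least two-valued model of a definite program. -/
def TplusOmega (P : Program atom) : Set atom := ⋃ n, TplusIter P n

/-- The Gelfond–Lifschitz reduct `P/M`. -/
def GLreduct (P : Program atom) (M : Set atom) : Program atom :=
  {C' | ∃ C ∈ P, (∀ b ∈ C.neg, b ∉ M) ∧ C' = ⟨C.head, C.pos, ∅⟩}

/-- The Gelfond–Lifschitz operator. -/
def GLop (P : Program atom) (M : Set atom) : Set atom := TplusOmega (GLreduct P M)

/-- Stable model. -/
def Stable (P : Program atom) (M : Set atom) : Prop := GLop P M = M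

def posLits (S : Set atom) : Interp atom := Lit.pos '' S
def negLits (S : Set atom) : Interp atom := Lit.neg '' S

/-- Three-valued immediate-consequence operator `T_P`. -/
def TP (P : Program atom) (I : Interp atom) : Set atom :=
  {A | ∃ C ∈ P, C.head = A ∧ BodyTrue I C}

/-- `F_P`: atoms all of whose clauses have false bodies. -/
def FP (P : Program atom) (I : Interp atom) : Set atom :=
  {A | ∀ C ∈ P, C.head = A → BodyFalse I C}

/-- Fitting's operator `Φ_P`. -/
def Phi (P : Program atom) (I : Interp atom) : Interp atom :=
  posLits (TP P I) ∪ negLits (FP P I)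

/-- Knaster–Tarski least (pre-)fixed point of an operator on sets. -/
def lfpSet {L : Type*} (F : Set L → Set L) : Set L := ⋂₀ {I | F I ⊆ I}

/-- Knaster–Tarski greatest (post-)fixed point of an operator on sets. -/
def gfpSet {L : Type*} (F : Set L → Set L) : Set L := ⋃₀ {I | I ⊆ F I}

/-- The Fitting (Kripke–Kleene) model: least fixed point of `Φ_P`. -/
def FittingModel (P : Program atom) : Interp atom := lfpSet (Phi P)

/-- Transfinite iteration `F ↑ α` of an operator starting from `∅`. -/
noncomputable def iterOrd {L : Type*} (F : Set L → Set L) (α : Ordinal.{0}) : Set L :=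
  Ordinal.limitRecOn α ∅ (fun _ ih => F ih) (fun o _ ih => ⋃ β, ⋃ h : β < o, ih β h)

/-- `U` is an unfounded set of `P` with respect to `I`. -/
def Unfounded (P : Program atom) (I : Interp atom) (U : Set atom) : Prop :=
  ∀ A ∈ U, ∀ C ∈ P, C.head = A → BodyFalse I C ∨ ∃ a ∈ C.pos, a ∈ U

/-- The greatest unfounded set of `P` with respect to `I`. -/
def UP (P : Program atom) (I : Interp atom) : Set atom := ⋃₀ {U | Unfounded P I U}

/-- The van Gelder–Ross–Schlipf operator `W_P`. -/
def WP (P : Program atom) (I : Interp atom) : Interp atom :=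
  posLits (TP P I) ∪ negLits (UP P I)

/-- The well-founded model: least fixed point of `W_P`. -/
def WFModel (P : Program atom) : Interp atom := lfpSet (WP P)

/-- `P` satisfies (F) with respect to `I` and the level mapping `l`. -/
def CondF (P : Program atom) (I : Interp atom) (l : atom → Ordinal.{0}) : Prop :=
  ∀ A : atom, Defined I A →
    (Lit.pos A ∈ I ∧ ∃ C ∈ P, C.head = A ∧
        (∀ a ∈ C.pos, Lit.pos a ∈ I ∧ l a < l A) ∧
        (∀ b ∈ C.neg, Lit.neg b ∈ I ∧ l b < l A)) ∨
    (Lit.neg A ∈ I ∧ ∀ C ∈ P, C.head = A →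
        (∃ a ∈ C.pos, Lit.neg a ∈ I ∧ l a < l A) ∨
        (∃ b ∈ C.neg, Lit.pos b ∈ I ∧ l b < l A))

/-- `P` satisfies (WF) with respect to `I` and the level mapping `l`. -/
def CondWF (P : Program atom) (I : Interp atom) (l : atom → Ordinal.{0}) : Prop :=
  ∀ A : atom, Defined I A →
    (Lit.pos A ∈ I ∧ ∃ C ∈ P, C.head = A ∧
        (∀ a ∈ C.pos, Lit.pos a ∈ I ∧ l a < l A) ∧
        (∀ b ∈ C.neg, Lit.neg b ∈ I ∧ l b < l A)) ∨
    (Lit.neg A ∈ I ∧ ∀ C ∈ P, C.head = A →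
        (∃ a ∈ C.pos, Lit.neg a ∈ I ∧ l a ≤ l A) ∨
        (∃ b ∈ C.neg, Lit.pos b ∈ I ∧ l b < l A))

/-- `P` satisfies (WS) with respect to `I` and the level mapping `l`. -/
def CondWS (P : Program atom) (I : Interp atom) (l : atom → Ordinal.{0}) : Prop :=
  ∀ A : atom, Defined I A →
    (Lit.pos A ∈ I ∧ ∃ C ∈ P, C.head = A ∧
        (∀ a ∈ C.pos, Lit.pos a ∈ I ∧ l a < l A) ∧
        (∀ b ∈ C.neg, Lit.neg b ∈ I ∧ l b < l A)) ∨
    (Lit.neg A ∈ I ∧ ∀ C ∈ P, C.head = A →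
        (∃ a ∈ C.pos, Lit.neg a ∈ I ∧ l a < l A) ∨
        ((∀ a ∈ C.pos, l a ≤ l A) ∧ (∀ b ∈ C.neg, l b < l A) ∧
            ∃ a ∈ C.pos, Lit.neg a ∈ I) ∨
        (∃ b ∈ C.neg, Lit.pos b ∈ I ∧ l b < l A))

/-- `A` refers to `B`. -/
def RefersTo (P : Program atom) (A B : atom) : Prop :=
  ∃ C ∈ P, C.head = A ∧ (B ∈ C.pos ∨ B ∈ C.neg)

/-- `A` refers negatively to `B`. -/
def RefersNeg (P : Program atom) (A B : atom) : Prop :=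
  ∃ C ∈ P, C.head = A ∧ B ∈ C.neg

/-- `DepOn P A B`: `A` depends on `B`, i.e. `B ≤ A`. -/
def DepOn (P : Program atom) : atom → atom → Prop := Relation.TransGen (RefersTo P)

/-- `DepNeg P B A`: `B < A`, i.e. `A` depends negatively on `B`. -/
def DepNeg (P : Program atom) (B A : atom) : Prop :=
  ∃ C D, RefersNeg P C D ∧ (DepOn P A C ∨ C = A) ∧ (DepOn P D B ∨ B = D)

/-- `A ~ B`. -/
def Sim (P : Program atom) (A B : atom) : Prop :=
  A = B ∨ (DepNeg P A B ∧ DepNeg P B A)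

/-- The components of `P`: equivalence classes of `~`. -/
def IsComponent (P : Program atom) (C : Set atom) : Prop :=
  ∃ A : atom, C = {B | Sim P A B}

/-- A trivial component: a singleton `{A}` with `A ≮ A`. -/
def TrivialComponent (P : Program atom) (C : Set atom) : Prop :=
  ∃ A : atom, C = {A} ∧ ¬ DepNeg P A A

/-- The ordering `≺` on components. -/
def CompLt (P : Program atom) (C₁ C₂ : Set atom) : Prop :=
  C₁ ≠ C₂ ∧ ∀ A₁ ∈ C₁, ∃ A₂ ∈ C₂, DepNeg P A₁ A₂

def MinimalComponent (P : Program atom) (C : Set atom) : Prop :=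
  IsComponent P C ∧ ¬ ∃ C₂, IsComponent P C₂ ∧ CompLt P C₂ C

/-- The bottom stratum `S(P)`: union of all minimal components. -/
def bottomStratum (P : Program atom) : Set atom :=
  {A | ∃ C, MinimalComponent P C ∧ A ∈ C}

/-- The bottom layer `L(P)`: clauses with head in the bottom stratum. -/
def bottomLayer (P : Program atom) : Program atom :=
  {C ∈ P | C.head ∈ bottomStratum P}

/-- Delete from the body of `C` all literals true in `I`. -/
noncomputable def reduceClause (I : Interp atom) (C : Clause atom) : Clause atom :=
  letI : ∀ p : Prop, Decidable p := fun p => Classical.propDecidable p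
  ⟨C.head, C.pos.filter (fun a => Lit.pos a ∉ I), C.neg.filter (fun b => Lit.neg b ∉ I)⟩

/-- Steps (1) and (2) of the reduct of `P` with respect to `I`. -/
noncomputable def step12 (P : Program atom) (I : Interp atom) : Program atom :=
  {C' | ∃ C ∈ P, Lit.pos C.head ∉ I ∧ ¬ BodyFalse I C ∧ C' = reduceClause I C}

def IsUnitClause (C : Clause atom) : Prop := C.pos = ∅ ∧ C.neg = ∅

/-- The reduct `P/I` of Przymusinska–Przymusinski (steps (1)–(3)). -/
noncomputable def reduct (P : Program atom) (I : Interp atom) : Program atom :=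
  {C ∈ step12 P I | IsUnitClause C ∨ ¬ ∃ C' ∈ step12 P I, C'.head = C.head ∧ IsUnitClause C'}

/-- The atoms occurring in `P`. -/
def atomsOf (P : Program atom) : Set atom :=
  {A | ∃ C ∈ P, A = C.head ∨ A ∈ C.pos ∨ A ∈ C.neg}

/-- `R`: atoms undefined in `N` which are eliminated from `P` by reducing w.r.t. `N`. -/
noncomputable def Ratoms (P : Program atom) (N : Interp atom) : Set atom :=
  {A | A ∈ atomsOf P ∧ A ∉ atomsOf (reduct P N) ∧ ¬ Defined N A}

/-- The definite (partial) model of a definite program `Q`. -/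
def defPartialModel (Q : Program atom) : Interp atom :=
  posLits (TplusOmega Q) ∪ negLits (atomsOf Q \ TplusOmega Q)

/-- The stopping condition of the weakly perfect model construction at `N`. -/
noncomputable def stopCond (P : Program atom) (N : Interp atom) : Prop :=
  reduct P N = ∅ ∨ bottomStratum (reduct P N) = ∅ ∨
    ∃ C ∈ bottomLayer (reduct P N), C.neg ≠ ∅

/-- `M_α` computed from `N_α` (empty if the construction has stopped). -/
noncomputable def Mstep (P : Program atom) (N : Interp atom) : Interp atom :=
  letI : ∀ p : Prop, Decidable p := fun p => Classical.propDecidable p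
  if stopCond P N then ∅
  else defPartialModel (bottomLayer (reduct P N)) ∪ negLits (Ratoms P N)

/-- `N_α = ⋃_{0<δ<α} M_δ` of the weakly perfect model construction. -/
noncomputable def Nseq (P : Program atom) : Ordinal.{0} → Interp atom :=
  Ordinal.lt_wf.fix (C := fun _ => Interp atom)
    (fun α ih => ⋃ β : Ordinal.{0}, ⋃ h : β < α, Mstep P (ih β h))

/-- The stage at which the weakly perfect model construction stops. -/
noncomputable def wpStop (P : Program atom) : Ordinal.{0} :=
  sInf {α | stopCond P (Nseq P α)}

/-- The weakly perfect model `M_P = N_α ∪ ¬R_α` at the stopping stage `α`. -/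
noncomputable def weaklyPerfectModel (P : Program atom) : Interp atom :=
  Nseq P (wpStop P) ∪ negLits (Ratoms P (Nseq P (wpStop P)))

/-- Clause subsumption `C₁ ≼ C₂`. -/
def ClauseSub (C₁ C₂ : Clause atom) : Prop :=
  C₁.head = C₂.head ∧ C₁.pos ⊆ C₂.pos ∧ C₁.neg ⊆ C₂.neg

/-- `P'` subsumes `Q` model-consistently with respect to `I`: `P' ≼_I Q`. -/
def SubsumesMC (P' Q : Program atom) (I : Interp atom) : Prop :=
  (∀ C₁ ∈ P', ∃ C₂ ∈ Q, ClauseSub C₁ C₂ ∧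
      (∀ a ∈ C₂.pos, a ∉ C₁.pos → Lit.pos a ∈ I) ∧
      (∀ b ∈ C₂.neg, b ∉ C₁.neg → Lit.neg b ∈ I)) ∧
  (∀ C₂ ∈ Q, BodyTrue I C₂ → Lit.pos C₂.head ∉ I → ∃ C₁ ∈ P', ClauseSub C₁ C₂)

/-!
Write `M` for the Fitting model and `M⁺` for its set of true atoms. Fitting's operator commutes with
the involution sending a set of literals to the literals it does not refute; hence the literals not
refuted by `M` form a fixed point, which contains `M` by leastness, and `M` is consistent.

By consistency, a clause with all its negative literals true in `M` survives in the reduct `P/M⁺`,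
so every derivation of a true atom in `M` is also a derivation from the reduct: `M⁺ ⊆ GL_P(M⁺)`.
Conversely, once `M` decides every atom that occurs negated, failing to be in `M⁺` means being false
in `M`, so `M⁺` is a two-valued model of `P` and therefore contains the least model of the reduct.
-/

theorem lfpSet_subset {L : Type*} {F : Set L → Set L} {I : Set L} (h : F I ⊆ I) :
    lfpSet F ⊆ I :=
  Set.sInter_subset_of_mem h

theorem map_lfpSet {L : Type*} {F : Set L → Set L} (hF : Monotone F) :
    F (lfpSet F) = lfpSet F :=
  OrderHom.map_lfp ⟨F, hF⟩

theorem lfpSet_induction {L : Type*} {F : Set L → Set L} (hF : Monotone F) {S : Set L}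
    (h : F (lfpSet F ∩ S) ⊆ S) : lfpSet F ⊆ S :=
  have hpre : F (lfpSet F ∩ S) ⊆ lfpSet F ∩ S :=
    Set.subset_inter ((hF Set.inter_subset_left).trans (map_lfpSet hF).subset) h
  (lfpSet_subset hpre).trans Set.inter_subset_right

theorem pos_mem_posLits_union_negLits {S T : Set atom} {a : atom} :
    Lit.pos a ∈ posLits S ∪ negLits T ↔ a ∈ S := by
  simp [posLits, negLits]

theorem neg_mem_posLits_union_negLits {S T : Set atom} {a : atom} :
    Lit.neg a ∈ posLits S ∪ negLits T ↔ a ∈ T := by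
  simp [posLits, negLits]

section FittingModel

variable {P : Program atom} {I J : Interp atom} {C : Clause atom}

theorem BodyTrue.mono (hIJ : I ⊆ J) (hC : BodyTrue I C) : BodyTrue J C :=
  ⟨fun a ha => hIJ (hC.1 a ha), fun b hb => hIJ (hC.2 b hb)⟩

theorem BodyFalse.mono (hIJ : I ⊆ J) : BodyFalse I C → BodyFalse J C :=
  Or.imp (fun ⟨a, ha, haI⟩ => ⟨a, ha, hIJ haI⟩) (fun ⟨b, hb, hbI⟩ => ⟨b, hb, hIJ hbI⟩)

theorem phi_mono (P : Program atom) : Monotone (Phi P) := fun _ _ hIJ =>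
  Set.union_subset_union
    (Set.image_mono fun _ ⟨C, hC, hhead, hbody⟩ => ⟨C, hC, hhead, hbody.mono hIJ⟩)
    (Set.image_mono fun _ hfalse C hC hhead => (hfalse C hC hhead).mono hIJ)

theorem phi_fittingModel (P : Program atom) : Phi P (FittingModel P) = FittingModel P :=
  map_lfpSet (phi_mono P)

theorem pos_head_mem_fittingModel (hC : C ∈ P) (hbody : BodyTrue (FittingModel P) C) :
    Lit.pos C.head ∈ FittingModel P := by
  rw [← phi_fittingModel]
  exact pos_mem_posLits_union_negLits.2 ⟨C, hC, rfl, hbody⟩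

theorem pos_fittingModel_subset {S : Set atom}
    (hS : ∀ C ∈ P, (∀ a ∈ C.pos, a ∈ S) → (∀ b ∈ C.neg, Lit.neg b ∈ FittingModel P) →
      C.head ∈ S) :
    {A | Lit.pos A ∈ FittingModel P} ⊆ S := by
  suffices hsub : FittingModel P ⊆ posLits S ∪ negLits Set.univ from
    fun A hA => pos_mem_posLits_union_negLits.1 (hsub hA)
  refine lfpSet_induction (phi_mono P) (Set.union_subset_union (Set.image_mono ?_)
    (Set.image_mono (Set.subset_univ _)))
  rintro _ ⟨C, hC, rfl, hpos, hneg⟩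
  exact hS C hC (fun a ha => pos_mem_posLits_union_negLits.1 (hpos a ha).2)
    (fun b hb => (hneg b hb).1)

/-- The literals whose complement is not in `I`, i.e. those that are not false in `I`. This is the
order-reversing involution on sets of literals that exchanges being true with not being false;
`I` is consistent exactly when `I ⊆ unrefuted I`. -/
def unrefuted (I : Interp atom) : Interp atom :=
  posLits {a | Lit.neg a ∉ I} ∪ negLits {a | Lit.pos a ∉ I}

theorem pos_mem_unrefuted {a : atom} : Lit.pos a ∈ unrefuted I ↔ Lit.neg a ∉ I :=
  pos_mem_posLits_union_negLits

theorem neg_mem_unrefuted {a : atom} : Lit.neg a ∈ unrefuted I ↔ Lit.pos a ∉ I :=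
  neg_mem_posLits_union_negLits

theorem consistent_of_subset_unrefuted (hI : I ⊆ unrefuted I) : Consistent I :=
  fun _ ⟨hpos, hneg⟩ => pos_mem_unrefuted.1 (hI hpos) hneg

theorem bodyTrue_unrefuted : BodyTrue (unrefuted I) C ↔ ¬ BodyFalse I C := by
  simp only [BodyTrue, BodyFalse, pos_mem_unrefuted, neg_mem_unrefuted, not_or, not_exists, not_and]

theorem bodyFalse_unrefuted : BodyFalse (unrefuted I) C ↔ ¬ BodyTrue I C := by
  simp only [BodyTrue, BodyFalse, pos_mem_unrefuted, neg_mem_unrefuted, not_and_or, not_forall,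
    exists_prop]

theorem phi_unrefuted (P : Program atom) (I : Interp atom) :
    Phi P (unrefuted I) = unrefuted (Phi P I) := by
  have hTP : TP P (unrefuted I) = {A | Lit.neg A ∉ Phi P I} := by
    ext A
    simp only [TP, Phi, FP, neg_mem_posLits_union_negLits, bodyTrue_unrefuted, Set.mem_ofPred_eq,
      not_forall, exists_prop]
  have hFP : FP P (unrefuted I) = {A | Lit.pos A ∉ Phi P I} := by
    ext A
    simp only [FP, Phi, TP, pos_mem_posLits_union_negLits, bodyFalse_unrefuted, Set.mem_ofPred_eq,
      not_exists, not_and]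
  rw [Phi, hTP, hFP, unrefuted]

theorem consistent_fittingModel (P : Program atom) : Consistent (FittingModel P) := by
  have hfix : Phi P (unrefuted (FittingModel P)) = unrefuted (FittingModel P) := by
    rw [phi_unrefuted, phi_fittingModel]
  exact consistent_of_subset_unrefuted (lfpSet_subset hfix.subset)

end FittingModel

section GelfondLifschitz

variable {P Q : Program atom} {M : Set atom} {C : Clause atom}

theorem tplus_mono (Q : Program atom) : Monotone (Tplus Q) :=
  fun _ _ hMN _ ⟨C, hC, hhead, hdef, hpos⟩ => ⟨C, hC, hhead, hdef, fun a ha => hMN (hpos a ha)⟩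

theorem tplusIter_mono (Q : Program atom) : Monotone (TplusIter Q) := by
  refine monotone_nat_of_le_succ fun n => ?_
  induction n with
  | zero => exact Set.empty_subset _
  | succ n ih => exact tplus_mono Q ih

theorem tplusOmega_subset (hM : Tplus Q M ⊆ M) : TplusOmega Q ⊆ M := by
  refine Set.iUnion_subset fun n => ?_
  induction n with
  | zero => exact Set.empty_subset _
  | succ n ih => exact (tplus_mono Q ih).trans hM

theorem tplus_tplusOmega_subset (Q : Program atom) : Tplus Q (TplusOmega Q) ⊆ TplusOmega Q := by
  rintro A ⟨C, hC, hhead, hdef, hpos⟩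
  -- Bodies are finite, so a single stage of the iteration already contains the whole body.
  obtain ⟨n, hn⟩ : ∃ n, (C.pos : Set atom) ⊆ TplusIter Q n :=
    (tplusIter_mono Q).directed_le.exists_mem_subset_of_finset_subset_biUnion hpos
  exact Set.mem_iUnion.2 ⟨n + 1, C, hC, hhead, hdef, hn⟩

theorem head_mem_glop (hC : C ∈ P) (hpos : ∀ a ∈ C.pos, a ∈ GLop P M)
    (hneg : ∀ b ∈ C.neg, b ∉ M) : C.head ∈ GLop P M :=
  tplus_tplusOmega_subset _ ⟨_, ⟨C, hC, hneg, rfl⟩, rfl, rfl, hpos⟩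

theorem Model2.glop_subset (hM : Model2 P M) : GLop P M ⊆ M := by
  refine tplusOmega_subset ?_
  rintro _ ⟨_, ⟨C, hC, hneg, rfl⟩, rfl, -, hpos⟩
  exact hM C hC hpos hneg

end GelfondLifschitz

section Stability

variable {P : Program atom}

theorem pos_fittingModel_subset_glop (P : Program atom) :
    {A | Lit.pos A ∈ FittingModel P} ⊆ GLop P {A | Lit.pos A ∈ FittingModel P} :=
  pos_fittingModel_subset fun _ hC hpos hneg =>
    head_mem_glop hC hpos fun b hb hbM => consistent_fittingModel P b ⟨hbM, hneg b hb⟩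

theorem model2_pos_fittingModel (h : ∀ C ∈ P, ∀ b ∈ C.neg, Defined (FittingModel P) b) :
    Model2 P {A | Lit.pos A ∈ FittingModel P} :=
  fun C hC hpos hneg => pos_head_mem_fittingModel hC
    ⟨hpos, fun b hb => (h C hC b hb).resolve_left (hneg b hb)⟩

theorem total_fitting_is_stable_general
    (h : ∀ C ∈ P, ∀ b ∈ C.neg, Defined (FittingModel P) b) :
    Stable P {A | Lit.pos A ∈ FittingModel P} :=
  (model2_pos_fittingModel h).glop_subset.antisymm (pos_fittingModel_subset_glop P)

end Stability

/-- if the Fitting model is total then its positive part is a stable model. -/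
theorem total_fitting_is_stable {atom : Type} [Countable atom] (P : Program atom)
    (h : Total (FittingModel P)) :
    Stable P {A | Lit.pos A ∈ FittingModel P} :=
  total_fitting_is_stable_general fun _ _ b _ => h b

end LP
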